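/- arXiv:2008.06554 — 3 statements merged into one kernel-verified Lean document; each statement's English description precedes it below -/
import Mathlib

section
/- Let α be a finite type, β a finite nonempty type, and x ∈ α. For every function g from the set of functions (α ∖ {x}) → β to β, the probability, over f drawn uniformly at random from the set of all functions α → β, that f(x) = g(the restriction of f to α ∖ {x}), is exactly 1/|β|. -/
/-- Probability of `P` under the uniform distribution on a finite type `Ω`. -/
noncomputable def unifProb {Ω : Type} [Fintype Ω] (P : Ω → Prop) : ℝ :=
  (Set.ncard {ω : Ω | P ω} : ℝ) / (Fintype.card Ω : ℝ)

theorem unifProb_comp_equiv {Ω Ω' : Type} [Fintype Ω] [Fintype Ω'] (e : Ω ≃ Ω') (P : Ω' → Prop) :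
    unifProb (fun ω => P (e ω)) = unifProb P := by
  have hncard : Set.ncard {ω | P (e ω)} = Set.ncard {ω' | P ω'} :=
    Set.ncard_preimage_of_injective_subset_range e.injective
      (e.surjective.range_eq ▸ Set.subset_univ _)
  rw [unifProb, unifProb, hncard, Fintype.card_congr e]

theorem ncard_setOf_fst_eq_apply_snd {β γ : Type*} (g : γ → β) :
    Set.ncard {p : β × γ | p.1 = g p.2} = Nat.card γ := by
  have hrange : {p : β × γ | p.1 = g p.2} = Set.range fun c => (g c, c) := by
    ext ⟨b, c⟩
    simp [eq_comm]
  have hinj : Function.Injective fun c => (g c, c) := fun _ _ => congrArg Prod.snd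
  rw [hrange, Set.ncard_range_of_injective hinj]

theorem unifProb_fst_eq_apply_snd {β γ : Type} [Fintype β] [Fintype γ] [Nonempty γ] (g : γ → β) :
    unifProb (fun p : β × γ => p.1 = g p.2) = 1 / (Fintype.card β : ℝ) := by
  have hγ : (Fintype.card γ : ℝ) ≠ 0 := Nat.cast_ne_zero.mpr Fintype.card_ne_zero
  rw [unifProb, ncard_setOf_fst_eq_apply_snd, Nat.card_eq_fintype_card, Fintype.card_prod,
    Nat.cast_mul, div_mul_cancel_right₀ hγ, one_div]

theorem stmt2_general {α : Type} [Fintype α] [DecidableEq α] {β : α → Type} [∀ a, Fintype (β a)]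
    [∀ a, Nonempty (β a)] (x : α) (g : (∀ y : {y : α // y ≠ x}, β y) → β x) :
    unifProb (fun f : ∀ a, β a => f x = g (fun y => f y.1)) = 1 / (Fintype.card (β x) : ℝ) :=
  (unifProb_comp_equiv (Equiv.piSplitAt x β) fun p => p.1 = g p.2).trans
    (unifProb_fst_eq_apply_snd g)

/-- **Fresh-point (lazy sampling) lemma.**
For a uniformly random function `f : α → β` and any predictor `g` that sees `f`
restricted to `α ∖ {x}`, the probability that `f x = g (f restricted away from x)`
is exactly `1/|β|`. -/
theorem stmt2 {α β : Type} [Fintype α] [DecidableEq α] [Fintype β] [Nonempty β] (x : α)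
    (g : ({y : α // y ≠ x} → β) → β) :
    unifProb (fun f : α → β => f x = g (fun y => f y.1)) = 1 / (Fintype.card β : ℝ) :=
  stmt2_general (β := fun _ => β) x g
end

section
/- There is an absolute constant K such that the following holds in the Line setting. For every deterministic MPC algorithm with m machines, local memory s bits, and at most q oracle queries per machine per round, and every integer k ≥ 0, the probability over uniformly random (RO, X) of the event E^{(k)} is at most K·w·v^p·(k+1)·m·q·2^(−u). (The paper, Lemma 3.3, states this bound with K = 1, i.e., Pr[E^{(k)}] ≤ w·v^{p}·(k+1)·m·q·2^(−u).) -/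
/-- Bit strings of length `k`. -/
abbrev Bits (k : ℕ) := Fin k → Bool

/-- The `j`-th bit (`0`-based) of a bit string, `false` out of range. -/
def bitAt {k : ℕ} (y : Bits k) (j : ℕ) : Bool := if h : j < k then y ⟨j, h⟩ else false

/-- The `i`-th block (`0`-based) of the input `X = (x_1, …, x_v)`. -/
def getX {u v : ℕ} (X : Fin v → Bits u) (i : ℕ) : Bits u :=
  if h : i < v then X ⟨i, h⟩ else fun _ => false
/-- The integer encoded by the first `κ` bits of a bit string. -/
def natOf {n : ℕ} (y : Bits n) (κ : ℕ) : ℕ :=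
  ∑ j ∈ Finset.range κ, if bitAt y j then 2 ^ j else 0

/-- `⟨i, x, ρ⟩` : the `n`-bit concatenation of the `W`-bit binary encoding of `i`, the
`u`-bit strings `x` and `ρ`, and trailing zeros. -/
def lineStr (n W u : ℕ) (i : ℕ) (x ρ : Bits u) : Bits n := fun j =>
  if (j : ℕ) < W then Nat.testBit i (j : ℕ)
  else if (j : ℕ) < W + u then bitAt x ((j : ℕ) - W)
  else if (j : ℕ) < W + 2 * u then bitAt ρ ((j : ℕ) - W - u)
  else false

/-- `lineChain n u v W κ RO X k = (ℓ_{k+1} − 1, r_{k+1})` : the Line chain, with the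
pointer stored `0`-based.  `ℓ_1 = 1, r_1 = 0^u`; `e_i = ⟨i, x_{ℓ_i}, r_i⟩`;
`ℓ_{i+1} − 1` is the integer encoded by the first `κ` bits of `RO(e_i)` (reduced mod
`v`, which is the identity when `v = 2^κ`), and `r_{i+1}` is the `u` bits of `RO(e_i)`
in positions `κ+1, …, κ+u`. -/
def lineChain (n u v W κ : ℕ) (RO : Bits n → Bits n) (X : Fin v → Bits u) :
    ℕ → ℕ × Bits u
  | 0 => (0, fun _ => false)
  | k + 1 =>
    let c := lineChain n u v W κ RO X k
    let e := lineStr n W u (k + 1) (getX X (c.1 % v)) c.2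
    (natOf (RO e) κ % v, fun j => bitAt (RO e) (κ + (j : ℕ)))

/-- `lineE n u v W κ RO X k` is the paper's `e_{k+1}`. -/
def lineE (n u v W κ : ℕ) (RO : Bits n → Bits n) (X : Fin v → Bits u) (k : ℕ) : Bits n :=
  lineStr n W u (k + 1) (getX X ((lineChain n u v W κ RO X k).1 % v))
    (lineChain n u v W κ RO X k).2

/-- `branchE n u v W κ RO X j a c` is the branch entry `e'_c` determined by the paper's
(1-based) index `j` and the (0-based) sequence `a` (only `a 1, …, a c` matter):
`e'_0 = ⟨j+1, x_{ℓ_{j+1}}, r_{j+1}⟩ = e_{j+1}`, and for `c ≥ 1`,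
`e'_c = ⟨j+c+1, x_{a_c}, ρ_c⟩` where `ρ_c` is the `u` bits of `RO(e'_{c−1})` in
positions `κ+1, …, κ+u`. -/
def branchE (n u v W κ : ℕ) (RO : Bits n → Bits n) (X : Fin v → Bits u) (j : ℕ)
    (a : ℕ → Fin v) : ℕ → Bits n
  | 0 => lineE n u v W κ RO X j
  | c + 1 => lineStr n W u (j + c + 2) (X (a (c + 1)))
      (fun t => bitAt (RO (branchE n u v W κ RO X j a c)) (κ + (t : ℕ)))
/-- Answers to the first `t` queries of a deterministic adaptive oracle algorithm whose
next-query function is `f`. -/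
def advAns (n : ℕ) (RO : Bits n → Bits n) (f : List (Bits n) → Bits n) : ℕ → List (Bits n)
  | 0 => []
  | t + 1 => advAns n RO f t ++ [RO (f (advAns n RO f t))]

/-- The `(t+1)`-st query (so the paper's `q_{t+1}`) of the adaptive algorithm `f`. -/
def advQ (n : ℕ) (RO : Bits n → Bits n) (f : List (Bits n) → Bits n) (t : ℕ) : Bits n :=
  f (advAns n RO f t)
/-- A deterministic MPC algorithm with `m` machines, local memory `s` bits, at most `q`
adaptive oracle queries (to an oracle on `n`-bit strings) per machine per round, on
inputs from `I`.  `init` splits the input into the machines' initial states, `qf k i` is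
machine `i`'s next-query function in round `k` (from its state and the answers received
so far in the round), and `cf k i` produces the messages machine `i` sends to each
machine at the end of round `k`; each machine receives at most `s` bits per round. -/
structure MPC (n s q m : ℕ) (I : Type) where
  init : I → Fin m → Bits s
  qf : ℕ → Fin m → Bits s → List (Bits n) → Bits n
  cf : ℕ → Fin m → Bits s → List (Bits n) → Fin m → List Bool
  comm_le : ∀ (k : ℕ) (st : Fin m → Bits s) (ans : Fin m → List (Bits n)) (j : Fin m),
    (∑ i : Fin m, (cf k i (st i) (ans i) j).length) ≤ s

/-- Pad/truncate a list of booleans to an `s`-bit state. -/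
def listToBits (s : ℕ) (L : List Bool) : Bits s := fun b => L.getD (b : ℕ) false

/-- `mstate A RO X k i` : the state of machine `i` at the beginning of round `k` when the
MPC algorithm `A` is run with oracle `RO` on input `X`. -/
def mstate {n s q m : ℕ} {I : Type} (A : MPC n s q m I) (RO : Bits n → Bits n) (X : I) :
    ℕ → Fin m → Bits s
  | 0 => A.init X
  | k + 1 => fun j =>
      listToBits s ((List.ofFn (fun i : Fin m =>
        A.cf k i (mstate A RO X k i)
          (advAns n RO (A.qf k i (mstate A RO X k i)) q) j)).flatten)

/-- The `(t+1)`-st oracle query of machine `i` in round `k` of the run of `A` with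
oracle `RO` on input `X`. -/
def mquery {n s q m : ℕ} {I : Type} (A : MPC n s q m I) (RO : Bits n → Bits n) (X : I)
    (k : ℕ) (i : Fin m) (t : ℕ) : Bits n :=
  advQ n RO (A.qf k i (mstate A RO X k i)) t

/-!
Fix a query slot (machine, round, position) and a branch `a_1, …, a_b`. If the query made there is
the branch entry `e'_b`, it contains `ρ_b`, which is a window of `u` bits of the oracle's answer at
the previous entry. Neither the query nor the previous entry changes when that answer is resampled:
the previous entry has not been queried before, and it depends on the oracle only through entries
with a smaller index. So the query agrees with `ρ_b` with probability at most `2^(-u)`.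

The starting point `j` need not be guessed, since it can be read off the index `j + b + 1` in the
first `W` bits of the query. The union bound therefore runs over the `(k + 1) m q` slots and the
`∑_{b ≤ p} v^b ≤ 2 v^p` branches only, and `2 v^p ≤ w v^p` gives the constant `K = 1` of the paper.
-/

/-! ### The uniform distribution and resampling one oracle answer -/

section UnifProb

variable {Ω : Type} [Fintype Ω]

theorem unifProb_mono {P Q : Ω → Prop} (h : ∀ ω, P ω → Q ω) : unifProb P ≤ unifProb Q := by
  unfold unifProb
  gcongr
  · exact Set.toFinite _
  · exact h _

theorem unifProb_exists_le_card_mul {ι : Type*} [Fintype ι] {P : ι → Ω → Prop} {c : ℝ}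
    (h : ∀ i, unifProb (P i) ≤ c) : unifProb (fun ω => ∃ i, P i ω) ≤ Fintype.card ι * c := by
  have union_bound : ({ω | ∃ i, P i ω}.ncard : ℝ) ≤ ∑ i, ({ω | P i ω}.ncard : ℝ) := by
    rw [Set.ofPred_exists]
    exact_mod_cast Set.ncard_iUnion_le_of_fintype _
  calc unifProb (fun ω => ∃ i, P i ω)
      ≤ (∑ i, ({ω | P i ω}.ncard : ℝ)) / Fintype.card Ω := by unfold unifProb; gcongr
    _ = ∑ i, unifProb (P i) := Finset.sum_div _ _ _
    _ ≤ ∑ _i : ι, c := Finset.sum_le_sum fun i _ => h i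
    _ = Fintype.card ι * c := by simp

theorem unifProb_le_inv_card_of_injective {γ : Type*} [Fintype γ] [Nonempty γ] {P : Ω → Prop}
    {f : {ω // P ω} × γ → Ω} (hf : Function.Injective f) :
    unifProb P ≤ (Fintype.card γ : ℝ)⁻¹ := by
  have card_le : {ω | P ω}.ncard * Fintype.card γ ≤ Fintype.card Ω := by
    rw [← Nat.card_eq_fintype_card (α := γ), ← Nat.card_eq_fintype_card (α := Ω),
      ← Nat.card_coe_set_eq, ← Nat.card_prod]
    exact Nat.card_le_card_of_injective f hf
  rw [unifProb]
  refine div_le_of_le_mul₀ (by positivity) (by positivity) ?_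
  rw [le_inv_mul_iff₀ (by positivity), mul_comm]
  exact_mod_cast card_le

/-- The answer at `point ω` is resampled only in the part seen by `read`. From the resampled oracle,
`point` and `target` are still known, so the old answer can be restored: the new oracle determines
both `ω` and the fresh value. -/
theorem unifProb_le_inv_card_of_resample {α β γ I : Type} [Fintype α] [DecidableEq α] [Fintype β]
    [Fintype γ] [Nonempty γ] [Fintype I] {read : β → γ} {write : β → γ → β}
    (read_write : ∀ y z, read (write y z) = z)
    (write_write_read : ∀ y z, write (write y z) (read y) = y)
    {P : (α → β) × I → Prop} (point : (α → β) × I → α) (target : (α → β) × I → γ)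
    (read_point : ∀ ω, P ω → read (ω.1 (point ω)) = target ω)
    (point_update : ∀ ω, P ω → ∀ y, point (Function.update ω.1 (point ω) y, ω.2) = point ω)
    (target_update : ∀ ω, P ω → ∀ y, target (Function.update ω.1 (point ω) y, ω.2) = target ω) :
    unifProb P ≤ (Fintype.card γ : ℝ)⁻¹ := by
  let resample : (α → β) × I → γ → (α → β) × I := fun ω z =>
    (Function.update ω.1 (point ω) (write (ω.1 (point ω)) z), ω.2)
  let recover : (α → β) × I → ((α → β) × I) × γ := fun ω =>
    (resample ω (target ω), read (ω.1 (point ω)))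
  have recover_resample (ω) (hω : P ω) (z) : recover (resample ω z) = (ω, z) := by
    have h_point : point (resample ω z) = point ω := point_update ω hω _
    have h_target : target (resample ω z) = read (ω.1 (point ω)) :=
      (target_update ω hω _).trans (read_point ω hω).symm
    simp only [recover, resample] at h_point h_target ⊢
    simp only [h_point, h_target, Function.update_self, Function.update_idem, read_write,
      write_write_read, Function.update_eq_self]
  refine unifProb_le_inv_card_of_injective (f := fun x : {ω // P ω} × γ => resample x.1 x.2) ?_
  refine Function.Injective.of_comp (f := recover) ?_
  convert Subtype.val_injective.prodMap (Function.injective_id (α := γ)) using 1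
  exact funext fun x => recover_resample x.1 x.1.2 x.2

end UnifProb

/-! ### Windows and indices of bit strings -/

section Bits

variable {n u : ℕ}

/-- The `u` consecutive bits of `y` from the `0`-based position `o` on; the nonces `r_{i+1}` and
`ρ_c` are such windows of oracle answers. -/
def window (o u : ℕ) (y : Bits n) : Bits u := fun t => bitAt y (o + t)

/-- The string `y` with its window of `u` bits from position `o` on replaced by `z`. -/
def setWindow (o : ℕ) (y : Bits n) (z : Bits u) : Bits n := fun i =>
  if o ≤ i ∧ i < o + u then bitAt z (i - o) else y i

theorem window_setWindow {o : ℕ} (ho : o + u ≤ n) (y : Bits n) (z : Bits u) :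
    window o u (setWindow o y z) = z := by
  funext t
  have ht : o + (t : ℕ) < n := by omega
  simp [window, setWindow, bitAt, ht]

theorem setWindow_setWindow_window (o : ℕ) (y : Bits n) (z : Bits u) :
    setWindow o (setWindow o y z) (window o u y) = y := by
  funext i
  by_cases hi : o ≤ i ∧ i < o + u
  · have h_lt : (i : ℕ) - o < u := by omega
    simp only [setWindow, if_pos hi, bitAt, dif_pos h_lt, window, Nat.add_sub_cancel' hi.1, i.2,
      dite_true, Fin.eta]
  · simp only [setWindow, if_neg hi]

theorem sum_range_testBit (i W : ℕ) :
    ∑ j ∈ Finset.range W, (if i.testBit j then 2 ^ j else 0) = i % 2 ^ W := by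
  induction W with
  | zero => simp [Nat.mod_one]
  | succ W ih =>
    rw [Finset.sum_range_succ, ih, Nat.mod_pow_succ, Nat.testBit_eq_decide_div_mod_eq]
    rcases Nat.mod_two_eq_zero_or_one (i / 2 ^ W) with h_bit | h_bit <;> simp [h_bit]

variable {W : ℕ}

theorem natOf_lineStr (hWn : W ≤ n) (i : ℕ) (x ρ : Bits u) :
    natOf (lineStr n W u i x ρ) W = i % 2 ^ W := by
  rw [← sum_range_testBit, natOf]
  refine Finset.sum_congr rfl fun j hj => ?_
  have hjW : j < W := Finset.mem_range.mp hj
  simp [bitAt, lineStr, hjW, hjW.trans_le hWn]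

theorem window_lineStr (hn : W + 2 * u ≤ n) (i : ℕ) (x ρ : Bits u) :
    window (W + u) u (lineStr n W u i x ρ) = ρ := by
  funext t
  have h_lt : W + u + (t : ℕ) < n := by omega
  have h_tail : W + u + (t : ℕ) < W + 2 * u := by omega
  have h_sub : W + u + (t : ℕ) - W - u = t := by omega
  have h_ge : ¬ W + u + (t : ℕ) < W := by omega
  simp [window, bitAt, lineStr, h_lt, h_ge, h_tail, h_sub]

end Bits

/-! ### Branch entries and their previous entries -/

section Entries

variable {n u v W : ℕ} (κ : ℕ) (RO : Bits n → Bits n) (X : Fin v → Bits u)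

/-- The previous entry of the branch entry `e'_b` of `V^{(j)}`: it is `e_j` (which is
`lineE … (j - 1)`) for `b = 0` and `e'_{b-1}` otherwise. -/
def prevEntry (n u v W κ : ℕ) (RO : Bits n → Bits n) (X : Fin v → Bits u) (j : ℕ)
    (a : ℕ → Fin v) (b : ℕ) : Bits n :=
  if b = 0 then lineE n u v W κ RO X (j - 1) else branchE n u v W κ RO X j a (b - 1)

theorem natOf_branchE (hWn : W ≤ n) (j : ℕ) (a : ℕ → Fin v) (b : ℕ) :
    natOf (branchE n u v W κ RO X j a b) W = (j + b + 1) % 2 ^ W := by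
  cases b <;> exact natOf_lineStr hWn _ _ _

theorem natOf_prevEntry (hWn : W ≤ n) {j : ℕ} (hj : 1 ≤ j) (a : ℕ → Fin v) (b : ℕ) :
    natOf (prevEntry n u v W κ RO X j a b) W = (j + b) % 2 ^ W := by
  obtain ⟨j, rfl⟩ := Nat.exists_eq_add_of_le' hj
  cases b with
  | zero => exact natOf_lineStr hWn _ _ _
  | succ b => exact natOf_branchE κ RO X hWn (j + 1) a b

theorem window_branchE (hn : W + 2 * u ≤ n) {j : ℕ} (hj : 1 ≤ j) (a : ℕ → Fin v) (b : ℕ) :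
    window (W + u) u (branchE n u v W κ RO X j a b) =
      window κ u (RO (prevEntry n u v W κ RO X j a b)) := by
  obtain ⟨j, rfl⟩ := Nat.exists_eq_add_of_le' hj
  cases b <;> exact window_lineStr hn _ _ _

theorem branchE_congr_seq (j : ℕ) {a a' : ℕ → Fin v} {b : ℕ} (h : Set.EqOn a a' (Set.Icc 1 b)) :
    branchE n u v W κ RO X j a b = branchE n u v W κ RO X j a' b := by
  induction b with
  | zero => rfl
  | succ b ih =>
    simp only [branchE, ih (h.mono (Set.Icc_subset_Icc_right b.le_succ)),
      h ⟨Nat.le_add_left 1 b, le_rfl⟩]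

theorem prevEntry_congr_seq (j : ℕ) {a a' : ℕ → Fin v} {b : ℕ}
    (h : Set.EqOn a a' (Set.Icc 1 b)) :
    prevEntry n u v W κ RO X j a b = prevEntry n u v W κ RO X j a' b := by
  cases b with
  | zero => rfl
  | succ b => exact branchE_congr_seq κ RO X j (h.mono (Set.Icc_subset_Icc_right b.le_succ))

section Agree

variable {RO} {RO' : Bits n → Bits n} {N : ℕ}

theorem lineChain_congr_oracle (hWn : W ≤ n) (h : ∀ e, natOf e W < N → RO' e = RO e) {k : ℕ}
    (hk : k < N) : lineChain n u v W κ RO' X k = lineChain n u v W κ RO X k := by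
  induction k with
  | zero => rfl
  | succ k ih =>
    simp only [lineChain, ih (k.lt_succ_self.trans hk)]
    rw [h _ (natOf_lineStr hWn _ _ _ ▸ (Nat.mod_le _ _).trans_lt hk)]

theorem lineE_congr_oracle (hWn : W ≤ n) (h : ∀ e, natOf e W < N → RO' e = RO e) {k : ℕ}
    (hk : k < N) : lineE n u v W κ RO' X k = lineE n u v W κ RO X k := by
  simp only [lineE, lineChain_congr_oracle κ X hWn h hk]

theorem branchE_congr_oracle (hWn : W ≤ n) (h : ∀ e, natOf e W < N → RO' e = RO e) (j : ℕ)
    (a : ℕ → Fin v) {b : ℕ} (hb : j + b < N) :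
    branchE n u v W κ RO' X j a b = branchE n u v W κ RO X j a b := by
  induction b with
  | zero => exact lineE_congr_oracle κ X hWn h hb
  | succ b ih =>
    simp only [branchE, ih (by omega)]
    rw [h _ (natOf_branchE κ RO X hWn j a b ▸ (Nat.mod_le _ _).trans_lt hb)]

theorem prevEntry_congr_oracle (hWn : W ≤ n) {j : ℕ} (hj : 1 ≤ j) (a : ℕ → Fin v) (b : ℕ)
    (h : ∀ e, natOf e W < j + b → RO' e = RO e) :
    prevEntry n u v W κ RO' X j a b = prevEntry n u v W κ RO X j a b := by
  cases b with
  | zero => exact lineE_congr_oracle κ X hWn h (by omega)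
  | succ b => exact branchE_congr_oracle κ X hWn h j a (by omega)

end Agree

theorem prevEntry_update_self (hWn : W ≤ n) {j : ℕ} (hj : 1 ≤ j) (a : ℕ → Fin v) {b : ℕ}
    (hjb : j + b < 2 ^ W) (y : Bits n) :
    prevEntry n u v W κ (Function.update RO (prevEntry n u v W κ RO X j a b) y) X j a b =
      prevEntry n u v W κ RO X j a b := by
  refine prevEntry_congr_oracle κ X hWn hj a b fun e he => Function.update_of_ne ?_ _ _
  rintro rfl
  rw [natOf_prevEntry κ RO X hWn hj, Nat.mod_eq_of_lt hjb] at he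
  exact he.false

end Entries

/-! ### Dependence of the queries on the oracle -/

section Queries

theorem advAns_congr_oracle {n : ℕ} {RO RO' : Bits n → Bits n} (f : List (Bits n) → Bits n)
    {T : ℕ} (h : ∀ t < T, RO' (advQ n RO f t) = RO (advQ n RO f t)) :
    advAns n RO' f T = advAns n RO f T := by
  induction T with
  | zero => rfl
  | succ T ih =>
    have h_last : RO' (f (advAns n RO f T)) = RO (f (advAns n RO f T)) := h T T.lt_succ_self
    simp only [advAns, ih fun t ht => h t (ht.trans T.lt_succ_self), h_last]

variable {n s q m : ℕ} {I : Type} (A : MPC n s q m I) {RO RO' : Bits n → Bits n} (X : I)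

/-- Query `t₁` of machine `i₁` in round `k₁` precedes query `t₂` of machine `i₂` in round `k₂`:
it belongs to an earlier round, or is an earlier query of the same machine in the same round. -/
def Precedes (k₁ : ℕ) (i₁ : Fin m) (t₁ : ℕ) (k₂ : ℕ) (i₂ : Fin m) (t₂ : ℕ) : Prop :=
  k₁ < k₂ ∨ (k₁ = k₂ ∧ i₁ = i₂ ∧ t₁ < t₂)

theorem mstate_congr_oracle {k : ℕ}
    (h : ∀ k₁ < k, ∀ i, ∀ t < q, RO' (mquery A RO X k₁ i t) = RO (mquery A RO X k₁ i t)) :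
    mstate A RO' X k = mstate A RO X k := by
  induction k with
  | zero => rfl
  | succ k ih =>
    have h_state : mstate A RO' X k = mstate A RO X k :=
      ih fun k₁ hk₁ => h k₁ (hk₁.trans k.lt_succ_self)
    have h_ans (i : Fin m) : advAns n RO' (A.qf k i (mstate A RO X k i)) q =
        advAns n RO (A.qf k i (mstate A RO X k i)) q :=
      advAns_congr_oracle _ (h k k.lt_succ_self i)
    simp only [mstate, h_state, h_ans]

theorem mquery_congr_oracle {k : ℕ} {i : Fin m} {t : ℕ} (ht : t < q)
    (h : ∀ k₁ i₁, ∀ t₁ < q, Precedes k₁ i₁ t₁ k i t →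
      RO' (mquery A RO X k₁ i₁ t₁) = RO (mquery A RO X k₁ i₁ t₁)) :
    mquery A RO' X k i t = mquery A RO X k i t := by
  have h_state : mstate A RO' X k = mstate A RO X k :=
    mstate_congr_oracle A X fun k₁ hk₁ i₁ t₁ ht₁ => h k₁ i₁ t₁ ht₁ (Or.inl hk₁)
  rw [mquery, mquery, h_state, advQ, advQ, advAns_congr_oracle _ fun t₁ ht₁ =>
    h k i t₁ (ht₁.trans ht) (Or.inr ⟨rfl, rfl, ht₁⟩)]

theorem mquery_update_of_forall_ne {k : ℕ} {i : Fin m} {t : ℕ} (ht : t < q) {e : Bits n}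
    (h : ∀ k₁ i₁, ∀ t₁ < q, Precedes k₁ i₁ t₁ k i t → mquery A RO X k₁ i₁ t₁ ≠ e) (y : Bits n) :
    mquery A (Function.update RO e y) X k i t = mquery A RO X k i t :=
  mquery_congr_oracle A X ht fun k₁ i₁ t₁ ht₁ hprec =>
    Function.update_of_ne (h k₁ i₁ t₁ ht₁ hprec) _ _

end Queries

/-! ### Queries that skip the previous entry -/

section Skip

variable {n u v s q m : ℕ} (κ W : ℕ) (A : MPC n s q m (Fin v → Bits u))

/-- Query `t` of machine `i` in round `k` is the branch entry `e'_b` of `V^{(j)}` on the branch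
`a`, and no query equal to the previous entry of `e'_b` precedes it. -/
def SkipsAt (k : ℕ) (i : Fin m) (t j b : ℕ) (a : ℕ → Fin v)
    (ω : (Bits n → Bits n) × (Fin v → Bits u)) : Prop :=
  mquery A ω.1 ω.2 k i t = branchE n u v W κ ω.1 ω.2 j a b ∧
    ∀ k₁ i₁, ∀ t₁ < q, Precedes k₁ i₁ t₁ k i t →
      mquery A ω.1 ω.2 k₁ i₁ t₁ ≠ prevEntry n u v W κ ω.1 ω.2 j a b

/-- The event `E^{(k)}`, for branches from `e_{j+1}` with `1 ≤ j ≤ w` and of length at most `p`. -/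
def SkipEvent (w p k : ℕ) (ω : (Bits n → Bits n) × (Fin v → Bits u)) : Prop :=
  ∃ k₂ ≤ k, ∃ i₂ : Fin m, ∃ t₂ < q, ∃ j, 1 ≤ j ∧ j ≤ w ∧ ∃ b ≤ p, ∃ a : ℕ → Fin v,
    mquery A ω.1 ω.2 k₂ i₂ t₂ = branchE n u v W κ ω.1 ω.2 j a b ∧
    ∀ (k₁ : ℕ) (i₁ : Fin m) (t₁ : ℕ), k₁ ≤ k → t₁ < q → Precedes k₁ i₁ t₁ k₂ i₂ t₂ →
      mquery A ω.1 ω.2 k₁ i₁ t₁ ≠ prevEntry n u v W κ ω.1 ω.2 j a b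

/-- The type of branches `a_1, …, a_b` of length `b ≤ p`. -/
abbrev Branch (v p : ℕ) : Type := Σ b : Fin (p + 1), Fin b → Fin v

variable {κ W A}

theorem SkipsAt.congr_seq {k : ℕ} {i : Fin m} {t j b : ℕ} {a a' : ℕ → Fin v}
    {ω : (Bits n → Bits n) × (Fin v → Bits u)} (hω : SkipsAt κ W A k i t j b a ω)
    (h : Set.EqOn a a' (Set.Icc 1 b)) : SkipsAt κ W A k i t j b a' ω := by
  rwa [SkipsAt, ← branchE_congr_seq κ ω.1 ω.2 j h, ← prevEntry_congr_seq κ ω.1 ω.2 j h]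

theorem unifProb_exists_skipsAt_le (hn : W + 2 * u ≤ n) (hκ : κ + u ≤ n) (k : ℕ) (i : Fin m)
    {t : ℕ} (ht : t < q) {w b : ℕ} (hwb : w + b + 1 < 2 ^ W) (a : ℕ → Fin v) :
    unifProb (fun ω => ∃ j, 1 ≤ j ∧ j ≤ w ∧ SkipsAt κ W A k i t j b a ω) ≤ ((2 : ℝ) ^ u)⁻¹ := by
  have hWn : W ≤ n := by omega
  let start (ω : (Bits n → Bits n) × (Fin v → Bits u)) : ℕ :=
    natOf (mquery A ω.1 ω.2 k i t) W - (b + 1)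
  let point (ω : (Bits n → Bits n) × (Fin v → Bits u)) : Bits n :=
    prevEntry n u v W κ ω.1 ω.2 (start ω) a b
  have skips_start (ω) (hω : ∃ j, 1 ≤ j ∧ j ≤ w ∧ SkipsAt κ W A k i t j b a ω) :
      1 ≤ start ω ∧ start ω ≤ w ∧ SkipsAt κ W A k i t (start ω) b a ω := by
    obtain ⟨j, hj, hjw, hskip⟩ := hω
    have start_eq : start ω = j := by
      have hjb : j + b + 1 < 2 ^ W := by omega
      simp only [start, hskip.1, natOf_branchE κ ω.1 ω.2 hWn, Nat.mod_eq_of_lt hjb]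
      omega
    rw [start_eq]
    exact ⟨hj, hjw, hskip⟩
  have query_update (ω) (hω : ∃ j, 1 ≤ j ∧ j ≤ w ∧ SkipsAt κ W A k i t j b a ω) (y) :
      mquery A (Function.update ω.1 (point ω) y) ω.2 k i t = mquery A ω.1 ω.2 k i t :=
    mquery_update_of_forall_ne A ω.2 ht (skips_start ω hω).2.2.2 y
  have h_card : (Fintype.card (Bits u) : ℝ) = 2 ^ u := by simp
  rw [← h_card]
  refine unifProb_le_inv_card_of_resample (window_setWindow hκ) (setWindow_setWindow_window κ)
    point (fun ω => window (W + u) u (mquery A ω.1 ω.2 k i t)) ?_ ?_ ?_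
  · intro ω hω
    obtain ⟨hj, -, hskip⟩ := skips_start ω hω
    rw [hskip.1, window_branchE κ ω.1 ω.2 hn hj]
  · intro ω hω y
    obtain ⟨hj, hjw, -⟩ := skips_start ω hω
    simp only [point, start, query_update ω hω y]
    exact prevEntry_update_self κ ω.1 ω.2 hWn hj a (by omega) y
  · intro ω hω y
    rw [query_update ω hω y]

theorem SkipEvent.exists_branch (d : Fin v) {w p k : ℕ}
    {ω : (Bits n → Bits n) × (Fin v → Bits u)} (hω : SkipEvent κ W A w p k ω) :
    ∃ x : (Fin (k + 1) × Fin m × Fin q) × Branch v p, ∃ j, 1 ≤ j ∧ j ≤ w ∧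
      SkipsAt κ W A x.1.1 x.1.2.1 x.1.2.2 j x.2.1
        (Function.extend (fun c : Fin x.2.1 => (c : ℕ) + 1) x.2.2 fun _ => d) ω := by
  obtain ⟨k₂, hk₂, i, t, ht, j, hj, hjw, b, hb, a, hquery, hprev⟩ := hω
  refine ⟨((⟨k₂, by omega⟩, i, ⟨t, ht⟩), ⟨⟨b, by omega⟩, fun c => a (c + 1)⟩), j, hj, hjw, ?_⟩
  have hskip : SkipsAt κ W A k₂ i t j b a ω := by
    refine ⟨hquery, fun k₁ i₁ t₁ ht₁ hprec => hprev k₁ i₁ t₁ ?_ ht₁ hprec⟩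
    rcases hprec with hlt | ⟨rfl, -⟩
    exacts [hlt.le.trans hk₂, hk₂]
  have succ_injective : Function.Injective fun c : Fin b => (c : ℕ) + 1 :=
    fun _ _ h => Fin.ext (Nat.succ_injective h)
  refine hskip.congr_seq fun c hc => ?_
  obtain ⟨c, rfl⟩ := Nat.exists_eq_add_of_le' hc.1
  exact (succ_injective.extend_apply (fun c : Fin b => a (c + 1)) _ ⟨c, hc.2⟩).symm

theorem card_branch_le {v : ℕ} (hv : 2 ≤ v) (p : ℕ) :
    Fintype.card (Branch v p) ≤ 2 * v ^ p := by
  have card_eq : Fintype.card (Branch v p) = ∑ b ∈ Finset.range (p + 1), v ^ b := by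
    simp [Fin.sum_univ_eq_sum_range fun b => v ^ b]
  rw [card_eq, Finset.sum_range_succ, two_mul]
  exact Nat.add_le_add_right (Nat.geomSum_lt hv fun b hb => Finset.mem_range.mp hb).le _

theorem stmt8_general {w p : ℕ} (hv : 2 ≤ v) (hW : w + p + 1 < 2 ^ W) (hn : W + 2 * u ≤ n)
    (hκ : κ + u ≤ n) (A : MPC n s q m (Fin v → Bits u)) (k : ℕ) :
    unifProb (SkipEvent κ W A w p k) ≤
      2 * (v : ℝ) ^ p * ((k : ℝ) + 1) * (m : ℝ) * (q : ℝ) * (2 : ℝ) ^ (-(u : ℝ)) := by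
  let d : Fin v := ⟨0, by omega⟩
  have h_card : (Fintype.card (Branch v p) : ℝ) ≤ 2 * (v : ℝ) ^ p := by
    exact_mod_cast card_branch_le hv p
  calc unifProb (SkipEvent κ W A w p k)
      ≤ Fintype.card ((Fin (k + 1) × Fin m × Fin q) × Branch v p) * ((2 : ℝ) ^ u)⁻¹ :=
        (unifProb_mono fun _ hω => hω.exists_branch d).trans <|
          unifProb_exists_le_card_mul fun x =>
            unifProb_exists_skipsAt_le hn hκ _ _ x.1.2.2.2 (by omega) _
    _ = (k + 1) * (m * q) * Fintype.card (Branch v p) * ((2 : ℝ) ^ u)⁻¹ := by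
        simp only [Fintype.card_prod, Fintype.card_fin]
        push_cast
        rfl
    _ ≤ (k + 1) * (m * q) * (2 * (v : ℝ) ^ p) * ((2 : ℝ) ^ u)⁻¹ := by gcongr
    _ = 2 * (v : ℝ) ^ p * (k + 1) * m * q * (2 : ℝ) ^ (-(u : ℝ)) := by
        rw [Real.rpow_neg two_pos.le, Real.rpow_natCast]
        ring

end Skip

/-- **Lemma 3.3 (up to an absolute constant `K`).**
In the Line setting, for every deterministic MPC algorithm (`m` machines, `s`-bit local
memory, at most `q` queries per machine per round) and every round `k ≥ 0`, the
probability over uniformly random `(RO, X)` of the event `E^{(k)}` — some query made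
through round `k` equals a branch entry `e ∈ ∪_j V^{(j)}` without being preceded by a
query equal to the previous entry of `e` — is at most `K·w·v^p·(k+1)·m·q·2^(−u)`.
A query is preceded by all queries of earlier rounds and by the same machine's earlier
queries in the same round; the previous entry of `e'_b` is `e'_{b−1}` for `b ≥ 1` and
`e_j` for `b = 0`. -/
theorem stmt8 : ∃ K : ℝ, 0 < K ∧
    ∀ (n u v w κ p W s q m : ℕ),
    1 ≤ u → 2 ≤ w → 1 ≤ κ → v = 2 ^ κ →
    p = ⌈(Real.logb 2 w) ^ 2⌉₊ → W = Nat.clog 2 (w + p + 2) →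
    W + 2 * u ≤ n → κ + u ≤ n → 1 ≤ q → 1 ≤ m →
    ∀ (A : MPC n s q m (Fin v → Bits u)) (k : ℕ),
    unifProb (fun ω : (Bits n → Bits n) × (Fin v → Bits u) =>
      ∃ k2 ≤ k, ∃ i2 : Fin m, ∃ t2 < q, ∃ j, 1 ≤ j ∧ j ≤ w ∧ ∃ b ≤ p, ∃ a : ℕ → Fin v,
        mquery A ω.1 ω.2 k2 i2 t2 = branchE n u v W κ ω.1 ω.2 j a b ∧
        ∀ (k1 : ℕ) (i1 : Fin m) (t1 : ℕ), k1 ≤ k → t1 < q →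
          (k1 < k2 ∨ (k1 = k2 ∧ i1 = i2 ∧ t1 < t2)) →
          mquery A ω.1 ω.2 k1 i1 t1 ≠
            (if b = 0 then lineE n u v W κ ω.1 ω.2 (j - 1)
             else branchE n u v W κ ω.1 ω.2 j a (b - 1))) ≤
    K * (w : ℝ) * (v : ℝ) ^ p * ((k : ℝ) + 1) * (m : ℝ) * (q : ℝ) *
      (2 : ℝ) ^ (-(u : ℝ)) := by
  refine ⟨1, one_pos, fun n u v w κ p W s q m _ hw hκ hv _ hW hn hκn _ _ A k => ?_⟩
  have two_le_v : 2 ≤ v := hv ▸ Nat.le_self_pow (by omega) 2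
  have index_lt : w + p + 1 < 2 ^ W := hW ▸ Nat.le_pow_clog one_lt_two (w + p + 2)
  refine (stmt8_general two_le_v index_lt hn hκn A k).trans ?_
  rw [one_mul]
  gcongr
  exact_mod_cast hw
end

section
/- In the setting of Lemma 'smallint' (SimLine setting, u ≥ ⌈log₂ q⌉ + ⌈log₂ v⌉, A₁ mapping (RO, X) to {0,1}^s, A₂ mapping an s-bit state and an oracle to a list of q strings in {0,1}^n, Q(RO, X) the resulting query set, a ≥ 0 an integer, I ⊆ {a+1,…,min(a+v,w)}, α ≥ 1 an integer): if the probability over uniformly random (RO, X) that |Q(RO, X) ∩ {s_j : j ∈ I}| ≥ α equals ε, then there exist a set F of pairs (RO, X) with |F| ≥ ε·2^(n·2^n + u·v) and an injective function Enc from F into binary strings such that |Enc(RO, X)| ≤ n·2^n + s + α·(⌈log₂ q⌉ + ⌈log₂ v⌉) + (v − α)·u for every (RO, X) ∈ F. -/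
/-- The SimLine query string built from the step counter `k` (`0`-based, so paper index
`k+1`) and the current chain value `r`: the concatenation of `x_{(k mod v)+1}` (1-based),
`r`, and `n − 2u` zeros. -/
def simStr (n u v : ℕ) (X : Fin v → Bits u) (k : ℕ) (r : Bits u) : Bits n := fun j =>
  if (j : ℕ) < u then bitAt (getX X (k % v)) (j : ℕ)
  else if (j : ℕ) < 2 * u then bitAt r ((j : ℕ) - u)
  else false

/-- `simR n u v RO X k` is the paper's `r_{k+1}`:  `r_1 = 0^u` and
`r_{i+1} = ` the first `u` bits of `RO(s_i)`. -/
def simR (n u v : ℕ) (RO : Bits n → Bits n) (X : Fin v → Bits u) : ℕ → Bits u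
  | 0 => fun _ => false
  | k + 1 => fun j => bitAt (RO (simStr n u v X k (simR n u v RO X k))) (j : ℕ)

/-- `simS n u v RO X k` is the paper's `s_{k+1}`. -/
def simS (n u v : ℕ) (RO : Bits n → Bits n) (X : Fin v → Bits u) (k : ℕ) : Bits n :=
  simStr n u v X k (simR n u v RO X k)

/-!
Each of the `α` chain strings hit by the queries carries in its first `u` bits the input block
`x_{(j-1 mod v)+1}`, and these blocks are pairwise distinct since `I` spans at most `v` consecutive
steps. Given the oracle and the `s`-bit state the queries can be recomputed, so a position in the
query list and a block index replace the `u` bits of each of these blocks. It thus suffices to count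
the resulting codes: a decoder whose image contains `F` and whose domain has at most `2 ^ L`
elements yields an injective encoding of `F` into strings of length `L`.
-/

theorem extend_comp_extend_compl_range {ι κ β : Type*} (i : ι → κ) (f d : κ → β) :
    Function.extend i (f ∘ i)
      (Function.extend ((↑) : ↥(Set.range i)ᶜ → κ) (f ∘ (↑)) d) = f := by
  funext x
  by_cases hx : x ∈ Set.range i
  · obtain ⟨k, rfl⟩ := hx
    exact Function.FactorsThrough.extend_apply (fun _ _ h => congrArg f h) _ k
  · rw [Function.extend_apply' _ _ _ hx]
    exact Subtype.val_injective.extend_apply (f ∘ (↑)) d (⟨x, hx⟩ : ↥(Set.range i)ᶜ)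

theorem nonempty_embedding_of_le_ncard {β : Type*} {S : Set β} [Finite S] {α : ℕ}
    (h : α ≤ S.ncard) : Nonempty (Fin α ↪ S) := by
  have := Fintype.ofFinite S
  refine Function.Embedding.nonempty_of_card_le ?_
  rwa [Fintype.card_fin, ← Nat.card_eq_fintype_card, Nat.card_coe_set_eq]

theorem card_compl_range_embedding {ι κ : Type*} [Finite κ] (i : ι ↪ κ) :
    Nat.card ↥(Set.range i)ᶜ = Nat.card κ - Nat.card ι := by
  rw [Nat.card_coe_set_eq, Set.ncard_compl, ← Nat.card_coe_set_eq,
    Nat.card_range_of_injective i.injective]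

theorem exists_injOn_range_length_eq {T Ω : Type*} [Finite T] {L : ℕ} (hT : Nat.card T ≤ 2 ^ L)
    (decode : T → Ω) :
    ∃ Enc : Ω → List Bool, Set.InjOn Enc (Set.range decode) ∧
      ∀ ω ∈ Set.range decode, (Enc ω).length = L := by
  have := Fintype.ofFinite T
  obtain ⟨bits⟩ : Nonempty (T ↪ Bits L) :=
    Function.Embedding.nonempty_of_card_le (by simpa [Nat.card_eq_fintype_card] using hT)
  have hcode : ∀ ω, ω ∈ Set.range decode →
      ∃ l : List Bool, ∃ c, decode c = ω ∧ List.ofFn (bits c) = l := by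
    rintro _ ⟨c, rfl⟩
    exact ⟨_, c, rfl, rfl⟩
  choose! Enc hEnc using hcode
  refine ⟨Enc, fun ω hω ω' hω' h => ?_, fun ω hω => ?_⟩
  · obtain ⟨c, rfl, hc⟩ := hEnc ω hω
    obtain ⟨c', rfl, hc'⟩ := hEnc ω' hω'
    have hbits : bits c = bits c' := List.ofFn_injective (hc.trans (h.trans hc'.symm))
    rw [bits.injective hbits]
  · obtain ⟨c, -, hc⟩ := hEnc ω hω
    rw [← hc, List.length_ofFn]

theorem unifProb_mul_card {Ω : Type} [Fintype Ω] [Nonempty Ω] (P : Ω → Prop) :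
    unifProb P * Fintype.card Ω = ({ω | P ω} : Set Ω).ncard :=
  div_mul_cancel₀ _ (Nat.cast_ne_zero.2 Fintype.card_ne_zero)

theorem card_oracle_prod_input (n u v : ℕ) :
    Fintype.card ((Bits n → Bits n) × (Fin v → Bits u)) = 2 ^ (n * 2 ^ n + u * v) := by
  simp [← pow_mul, pow_add]

/-- The data stored by the encoding: the full oracle, the `s`-bit state, the positions in the query
list of `α` recovered blocks, the indices of these blocks in the input, and the other blocks
verbatim. -/
abbrev Code (n u v s q α : ℕ) : Type :=
  (Bits n → Bits n) × Bits s × (Fin α → Fin q) ×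
    Σ i : Fin α ↪ Fin v, ↥(Set.range i)ᶜ → Bits u

theorem card_code (n u v s q α : ℕ) :
    Nat.card (Code n u v s q α) =
      2 ^ (n * 2 ^ n) * (2 ^ s * (q ^ α * (v.descFactorial α * 2 ^ ((v - α) * u)))) := by
  simp only [Nat.card_prod, Nat.card_sigma, Nat.card_fun, Nat.card_fin,
    Nat.card_eq_fintype_card (α := Bool), Fintype.card_bool, card_compl_range_embedding,
    Finset.sum_const, Finset.card_univ, smul_eq_mul, Fintype.card_embedding_eq, Fintype.card_fin,
    ← pow_mul, mul_comm u]

theorem card_code_le (n u v s q α : ℕ) :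
    Nat.card (Code n u v s q α) ≤
      2 ^ (n * 2 ^ n + s + α * (Nat.clog 2 q + Nat.clog 2 v) + (v - α) * u) := by
  have hq : q ^ α ≤ 2 ^ (α * Nat.clog 2 q) := by
    rw [mul_comm, pow_mul]
    exact Nat.pow_le_pow_left (Nat.le_pow_clog one_lt_two q) α
  have hv : v.descFactorial α ≤ 2 ^ (α * Nat.clog 2 v) := by
    rw [mul_comm, pow_mul]
    exact (Nat.descFactorial_le_pow v α).trans
      (Nat.pow_le_pow_left (Nat.le_pow_clog one_lt_two v) α)
  calc Nat.card (Code n u v s q α)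
      = 2 ^ (n * 2 ^ n) * (2 ^ s * (q ^ α * (v.descFactorial α * 2 ^ ((v - α) * u)))) :=
        card_code n u v s q α
    _ ≤ 2 ^ (n * 2 ^ n) * (2 ^ s * (2 ^ (α * Nat.clog 2 q) *
          (2 ^ (α * Nat.clog 2 v) * 2 ^ ((v - α) * u)))) := by gcongr
    _ = _ := by ring

section SimLine

variable {n u v s q α : ℕ}

/-- The first `u` bits of a bit string, padded with `false` if it is shorter than `u`. -/
def firstBits (u : ℕ) (y : Bits n) : Bits u := fun j => bitAt y j

theorem firstBits_simS (hun : u ≤ n) (RO : Bits n → Bits n) (X : Fin v → Bits u) (k : ℕ) :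
    firstBits u (simS n u v RO X k) = getX X (k % v) := by
  funext j
  have hj : (j : ℕ) < n := j.isLt.trans_le hun
  simp [firstBits, simS, simStr, bitAt, hj]

theorem exists_blocks_eq_firstBits (hun : u ≤ n) (RO : Bits n → Bits n) (X : Fin v → Bits u)
    (B : Fin q → Bits n) (a : ℕ)
    (hα : α ≤ (Set.range B ∩ simS n u v RO X '' Set.Ico a (a + v)).ncard) :
    ∃ (t : Fin α → Fin q) (i : Fin α ↪ Fin v), ∀ k, X (i k) = firstBits u (B (t k)) := by
  obtain ⟨hits⟩ := nonempty_embedding_of_le_ncard hα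
  have hhit (k : Fin α) : ∃ (t : Fin q) (j : ℕ), B t = hits k ∧ j ∈ Set.Ico a (a + v) ∧
      simS n u v RO X j = hits k := by
    obtain ⟨⟨t, ht⟩, j, hj, hsj⟩ := (hits k).2
    exact ⟨t, j, ht, hj, hsj⟩
  choose t step ht hstep hsimS using hhit
  have hv (k : Fin α) : 0 < v := pos_of_lt_add_right ((hstep k).1.trans_lt (hstep k).2)
  have hinj : Function.Injective fun k => (⟨step k % v, Nat.mod_lt _ (hv k)⟩ : Fin v) := by
    intro k l hkl
    have hsteps : step k = step l := Nat.mod_injOn_Ico a v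
      (by simpa using hstep k) (by simpa using hstep l) (congrArg Fin.val hkl)
    exact hits.injective (Subtype.ext (by rw [← hsimS k, ← hsimS l, hsteps]))
  refine ⟨t, ⟨_, hinj⟩, fun k => ?_⟩
  rw [ht k, ← hsimS k, firstBits_simS hun, getX, dif_pos (Nat.mod_lt _ (hv k))]
  rfl

theorem setOf_exists_simS_pred_subset {a : ℕ} {I : Finset ℕ} (hI : I ⊆ Finset.Icc (a + 1) (a + v))
    (RO : Bits n → Bits n) (X : Fin v → Bits u) :
    {y | ∃ j ∈ I, simS n u v RO X (j - 1) = y} ⊆ simS n u v RO X '' Set.Ico a (a + v) := by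
  rintro _ ⟨j, hj, rfl⟩
  have hja := Finset.mem_Icc.1 (hI hj)
  exact ⟨j - 1, ⟨by omega, by omega⟩, rfl⟩

/-- Reruns `A2` on the stored state and oracle, reads the recovered blocks off its queries and
fills in the stored blocks; the `false` default is never reached. -/
noncomputable def decode (A2 : Bits s → (Bits n → Bits n) → Fin q → Bits n) :
    Code n u v s q α → (Bits n → Bits n) × (Fin v → Bits u) :=
  fun ⟨RO, state, t, i, rest⟩ =>
    (RO, Function.extend i (fun k => firstBits u (A2 state RO (t k)))
      (Function.extend (↑) rest fun _ _ => false))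

theorem mem_range_decode (A2 : Bits s → (Bits n → Bits n) → Fin q → Bits n)
    (RO : Bits n → Bits n) (X : Fin v → Bits u) (state : Bits s) (t : Fin α → Fin q)
    (i : Fin α ↪ Fin v) (hX : ∀ k, X (i k) = firstBits u (A2 state RO (t k))) :
    (RO, X) ∈ Set.range (decode (u := u) (v := v) (α := α) A2) := by
  refine ⟨⟨RO, state, t, i, X ∘ (↑)⟩, Prod.ext rfl ?_⟩
  simp only [decode, ← hX]
  exact extend_comp_extend_compl_range i X _

theorem stmt10_general (hun : u ≤ n)
    (A1 : (Bits n → Bits n) → (Fin v → Bits u) → Bits s)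
    (A2 : Bits s → (Bits n → Bits n) → Fin q → Bits n)
    (a : ℕ) (I : Finset ℕ) (hI : I ⊆ Finset.Icc (a + 1) (a + v)) (ε : ℝ)
    (hε : unifProb (fun ω : (Bits n → Bits n) × (Fin v → Bits u) =>
      α ≤ Set.ncard ({y : Bits n | ∃ t : Fin q, A2 (A1 ω.1 ω.2) ω.1 t = y} ∩
        {y : Bits n | ∃ j ∈ I, simS n u v ω.1 ω.2 (j - 1) = y})) = ε) :
    ∃ (F : Set ((Bits n → Bits n) × (Fin v → Bits u)))
      (Enc : (Bits n → Bits n) × (Fin v → Bits u) → List Bool),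
      ε * (2 : ℝ) ^ (n * 2 ^ n + u * v) ≤ (F.ncard : ℝ) ∧
      Set.InjOn Enc F ∧
      ∀ ω ∈ F, (Enc ω).length ≤
        n * 2 ^ n + s + α * (Nat.clog 2 q + Nat.clog 2 v) + (v - α) * u := by
  obtain ⟨Enc, hinj, hlen⟩ := exists_injOn_range_length_eq
    (card_code_le n u v s q α) (decode (u := u) (v := v) A2)
  have hdecode : {ω : (Bits n → Bits n) × (Fin v → Bits u) |
      α ≤ Set.ncard ({y : Bits n | ∃ t : Fin q, A2 (A1 ω.1 ω.2) ω.1 t = y} ∩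
        {y : Bits n | ∃ j ∈ I, simS n u v ω.1 ω.2 (j - 1) = y})} ⊆
      Set.range (decode (α := α) A2) := by
    rintro ⟨RO, X⟩ hα
    obtain ⟨t, i, hX⟩ := exists_blocks_eq_firstBits hun RO X (A2 (A1 RO X) RO) a <|
      hα.trans <| Set.ncard_le_ncard <|
        Set.inter_subset_inter_right _ (setOf_exists_simS_pred_subset hI RO X)
    exact mem_range_decode A2 RO X (A1 RO X) t i hX
  refine ⟨_, Enc, le_of_eq ?_, hinj.mono hdecode, fun ω hω => (hlen ω (hdecode hω)).le⟩
  rw [← hε, ← unifProb_mul_card, card_oracle_prod_input]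
  norm_cast

end SimLine

/-- **Encoding claim inside Lemma `smallint`.**
In the setting of Lemma `smallint`, if the probability over uniformly random `(RO, X)`
that `|Q(RO,X) ∩ {s_j : j ∈ I}| ≥ α` equals `ε`, then there is a set `F` of pairs
`(RO, X)` with `|F| ≥ ε·2^(n·2^n + u·v)` and an injective encoding of `F` into binary
strings of length at most `n·2^n + s + α(⌈log₂ q⌉ + ⌈log₂ v⌉) + (v − α)·u`. -/
theorem stmt10 (n u v w s q : ℕ) (hu : 1 ≤ u) (hn : 2 * u ≤ n) (hv : 2 ≤ v) (hw : 2 ≤ w)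
    (hs : 1 ≤ s) (hq : 1 ≤ q)
    (huq : Nat.clog 2 q + Nat.clog 2 v ≤ u)
    (A1 : (Bits n → Bits n) → (Fin v → Bits u) → Bits s)
    (A2 : Bits s → (Bits n → Bits n) → Fin q → Bits n)
    (a : ℕ) (I : Finset ℕ) (hI : I ⊆ Finset.Icc (a + 1) (min (a + v) w))
    (α : ℕ) (hα : 1 ≤ α) (ε : ℝ)
    (hε : unifProb (fun ω : (Bits n → Bits n) × (Fin v → Bits u) =>
      α ≤ Set.ncard ({y : Bits n | ∃ t : Fin q, A2 (A1 ω.1 ω.2) ω.1 t = y} ∩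
        {y : Bits n | ∃ j ∈ I, simS n u v ω.1 ω.2 (j - 1) = y})) = ε) :
    ∃ (F : Set ((Bits n → Bits n) × (Fin v → Bits u)))
      (Enc : (Bits n → Bits n) × (Fin v → Bits u) → List Bool),
      ε * (2 : ℝ) ^ (n * 2 ^ n + u * v) ≤ (F.ncard : ℝ) ∧
      Set.InjOn Enc F ∧
      ∀ ω ∈ F, (Enc ω).length ≤
        n * 2 ^ n + s + α * (Nat.clog 2 q + Nat.clog 2 v) + (v - α) * u :=
  stmt10_general (by omega) A1 A2 a I
    (hI.trans (Finset.Icc_subset_Icc_right (min_le_left _ _))) ε hε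
end
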